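/- If a generalised multi-clause-set F is non-empty and matching lean, then δ*(F) = δ(F) ≥ 1. -/

import Mathlib

open scoped Classical

namespace GCLS

variable {V α : Type} [DecidableEq V] [DecidableEq α]

/-- A finite "functional" set of (variable, value) pairs, with values inside the
given domains `D`; used both for clauses and for partial assignments. -/
def FinFn (D : V → Finset α) : Type :=
  { s : Finset (V × α) // (∀ p ∈ s, p.2 ∈ D p.1) ∧
      ∀ p ∈ s, ∀ q ∈ s, p.1 = q.1 → p = q }

variable {D : V → Finset α}

instance : DecidableEq (FinFn D) :=
  fun a b => decidable_of_iff (a.1 = b.1) Subtype.ext_iff.symm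

namespace FinFn

/-- The set of variables occurring. -/
def vars (s : FinFn D) : Finset V := s.1.image Prod.fst

/-- Restriction to the pairs whose variable lies in `W`. -/
def restrictVars (s : FinFn D) (W : Finset V) : FinFn D :=
  ⟨s.1.filter (fun p => p.1 ∈ W),
   fun p hp => s.2.1 p (Finset.mem_filter.mp hp).1,
   fun p hp q hq h =>
     s.2.2 p (Finset.mem_filter.mp hp).1 q (Finset.mem_filter.mp hq).1 h⟩

/-- Removal of a set of pairs. -/
def sdiff (s : FinFn D) (t : Finset (V × α)) : FinFn D :=
  ⟨s.1 \ t,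
   fun p hp => s.2.1 p (Finset.mem_sdiff.mp hp).1,
   fun p hp q hq h =>
     s.2.2 p (Finset.mem_sdiff.mp hp).1 q (Finset.mem_sdiff.mp hq).1 h⟩

end FinFn

/-- Clauses: finite sets of literals `(v,ε)` (meaning "v ≠ ε"), at most one literal
per variable, values inside the domains. -/
abbrev Clause (D : V → Finset α) := FinFn D

/-- Partial assignments: finitely many variables get values inside their domains. -/
abbrev PAssign (D : V → Finset α) := FinFn D

/-- `φ` satisfies the literal `(v,ε)` (i.e. "v ≠ ε"): `v` is assigned a value ≠ `ε`. -/
def SatLit (φ : PAssign D) (l : V × α) : Prop :=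
  ∃ ε, (l.1, ε) ∈ φ.1 ∧ ε ≠ l.2

/-- `φ` satisfies a clause iff it satisfies some literal of it. -/
def SatClause (φ : PAssign D) (C : Clause D) : Prop :=
  ∃ l ∈ C.1, SatLit φ l

/-- The clause obtained from `C` by deleting all literals falsified by `φ`. -/
def Clause.restrict (φ : PAssign D) (C : Clause D) : Clause D :=
  FinFn.sdiff C φ.1

/-- The operation `φ * F` on multi-clause-sets: remove all clauses satisfied by `φ`
and delete all falsified literals from the remaining clauses. -/
noncomputable def applyM (φ : PAssign D) (F : Multiset (Clause D)) : Multiset (Clause D) :=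
  (F.filter (fun C => ¬ SatClause φ C)).map (Clause.restrict φ)

/-- The operation `φ * F` on clause-sets (with contraction of equal clauses). -/
noncomputable def applyF (φ : PAssign D) (F : Finset (Clause D)) : Finset (Clause D) :=
  (F.filter (fun C => ¬ SatClause φ C)).image (Clause.restrict φ)

/-- Satisfiability: some partial assignment satisfies all clauses. -/
def Sat (F : Multiset (Clause D)) : Prop :=
  ∃ φ : PAssign D, applyM φ F = 0

/-- Minimal unsatisfiability of a clause-set. -/
def MinUnsat (F : Finset (Clause D)) : Prop :=
  ¬ Sat F.val ∧ ∀ F' ⊂ F, Sat F'.val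

/-- The variables of a multi-clause-set. -/
def mvars (F : Multiset (Clause D)) : Finset V := F.toFinset.sup FinFn.vars

/-- The deficiency `δ(F) = c(F) - Σ_{v ∈ var(F)} (|D_v| - 1)`. -/
def delta (F : Multiset (Clause D)) : ℤ :=
  (Multiset.card F : ℤ) - ∑ v ∈ mvars F, ((D v).card - 1 : ℤ)

lemma powerset_toFinset_nonempty (F : Multiset (Clause D)) :
    F.powerset.toFinset.Nonempty :=
  ⟨0, by simp⟩

/-- The maximal deficiency `δ*(F) = max {δ(F') : F' ≤ F}`. -/
noncomputable def deltaStar (F : Multiset (Clause D)) : ℤ :=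
  F.powerset.toFinset.sup' (powerset_toFinset_nonempty F) delta

/-- A tight sub-multi-clause-set: `F' ≤ F` with `δ(F') = δ*(F)`. -/
noncomputable def Tight (F F' : Multiset (Clause D)) : Prop :=
  F' ≤ F ∧ delta F' = deltaStar F

/-- `F` is matching satisfiable: the clause-variable graph `B(F)` has a matching
covering all clause-nodes.  Such a matching is encoded as a multiset `P` of pairs
(clause-occurrence, variable-node), where the variable-nodes `(v,k)`,
`k < |D v| - 1`, are the copies of the variable `v`; the matching covers each
clause-occurrence exactly once (`P.map Prod.fst = F`), uses pairwise distinct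
variable-nodes, and respects adjacency in `B(F)`. -/
def MatchingSat (F : Multiset (Clause D)) : Prop :=
  ∃ P : Multiset (Clause D × (V × ℕ)),
    P.map Prod.fst = F ∧ (P.map Prod.snd).Nodup ∧
    ∀ p ∈ P, p.2.1 ∈ FinFn.vars p.1 ∧ p.2.2 < (D p.2.1).card - 1

/-- The edge between clause `C` and the copies of variable `v` is retained in
`B_φ(F)`: the literal of `C` with variable `v` is satisfied by `φ`. -/
def EdgeSat (φ : PAssign D) (C : Clause D) (v : V) : Prop :=
  ∃ ε, (v, ε) ∈ C.1 ∧ SatLit φ (v, ε)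

/-- `φ` is matching-satisfying for `F`: `B_φ(F)` has a matching covering all
clause-nodes. -/
def MatchingSatisfying (φ : PAssign D) (F : Multiset (Clause D)) : Prop :=
  ∃ P : Multiset (Clause D × (V × ℕ)),
    P.map Prod.fst = F ∧ (P.map Prod.snd).Nodup ∧
    ∀ p ∈ P, p.2.2 < (D p.2.1).card - 1 ∧ EdgeSat φ p.1 p.2.1

/-- The maximum size of a matching in `B(F)`. -/
noncomputable def nu (F : Multiset (Clause D)) : ℕ :=
  sSup { k | ∃ P : Multiset (Clause D × (V × ℕ)),
    P.map Prod.fst ≤ F ∧ (P.map Prod.snd).Nodup ∧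
    (∀ p ∈ P, p.2.1 ∈ FinFn.vars p.1 ∧ p.2.2 < (D p.2.1).card - 1) ∧
    Multiset.card P = k }

/-- The maximum size of a matching in `B_φ(F)`. -/
noncomputable def nuSub (φ : PAssign D) (F : Multiset (Clause D)) : ℕ :=
  sSup { k | ∃ P : Multiset (Clause D × (V × ℕ)),
    P.map Prod.fst ≤ F ∧ (P.map Prod.snd).Nodup ∧
    (∀ p ∈ P, p.2.2 < (D p.2.1).card - 1 ∧ EdgeSat φ p.1 p.2.1) ∧
    Multiset.card P = k }

/-- `φ` is matching-maximum for `F`. -/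
noncomputable def MatchingMaximum (φ : PAssign D) (F : Multiset (Clause D)) : Prop :=
  nuSub φ F = nu F

/-- `φ` is an autarky for `F`: every clause touched by `φ` is satisfied by `φ`. -/
def IsAutarky (φ : PAssign D) (F : Multiset (Clause D)) : Prop :=
  ∀ C ∈ F, (FinFn.vars C ∩ FinFn.vars φ).Nonempty → SatClause φ C

/-- `F` is lean: it has no non-trivial autarky. -/
def IsLean (F : Multiset (Clause D)) : Prop :=
  ¬ ∃ φ : PAssign D, IsAutarky φ F ∧ (FinFn.vars φ ∩ mvars F).Nonempty

/-- The sub-multi-clause-set of clauses touched by the variables in `W`. -/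
noncomputable def touchedBy (F : Multiset (Clause D)) (W : Finset V) : Multiset (Clause D) :=
  F.filter (fun C => (FinFn.vars C ∩ W).Nonempty)

/-- The restriction `F[W]`: keep the clauses touching `W` and delete from them all
literals whose variable is not in `W`. -/
noncomputable def restrictTo (F : Multiset (Clause D)) (W : Finset V) : Multiset (Clause D) :=
  (touchedBy F W).map (fun C => FinFn.restrictVars C W)

/-- `φ` is a matching autarky for `F`: `φ` is matching-satisfying for the
sub-multi-clause-set of clauses touched by `φ`. -/
noncomputable def IsMatchingAutarky (φ : PAssign D) (F : Multiset (Clause D)) : Prop :=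
  MatchingSatisfying φ (touchedBy F (FinFn.vars φ))

/-- `F` is matching lean: no non-trivial matching autarky. -/
noncomputable def MatchingLean (F : Multiset (Clause D)) : Prop :=
  ¬ ∃ φ : PAssign D, IsMatchingAutarky φ F ∧ (FinFn.vars φ ∩ mvars F).Nonempty

lemma surp_nonempty {F : Multiset (Clause D)} (h : (mvars F).Nonempty) :
    ((mvars F).powerset.erase ∅).Nonempty := by
  obtain ⟨v, hv⟩ := h
  refine ⟨{v}, ?_⟩
  simp [Finset.mem_erase, Finset.singleton_subset_iff, hv]

/-- The surplus `surp(F) = min {δ(F[W]) : ∅ ≠ W ⊆ var(F)}` (and `0` if `var(F) = ∅`). -/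
noncomputable def surp (F : Multiset (Clause D)) : ℤ :=
  if h : (mvars F).Nonempty then
    ((mvars F).powerset.erase ∅).inf' (surp_nonempty h)
      (fun W => delta (restrictTo F W))
  else 0

/-- The number of occurrences of the literal `l` in `F`. -/
noncomputable def litCount (F : Multiset (Clause D)) (l : V × α) : ℕ :=
  Multiset.card (F.filter (fun C => l ∈ C.1))

/-- The number of occurrences `#_v(F)` of the variable `v` in `F`. -/
noncomputable def varCount (F : Multiset (Clause D)) (v : V) : ℕ :=
  ∑ ε ∈ D v, litCount F (v, ε)

/-- The partial assignment `⟨v → ε⟩`. -/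
def single (v : V) (ε : α) (hε : ε ∈ D v) : PAssign D :=
  ⟨{(v, ε)}, by
    refine ⟨?_, ?_⟩
    · intro p hp
      rw [Finset.mem_singleton] at hp
      subst hp; exact hε
    · intro p hp q hq _
      rw [Finset.mem_singleton] at hp hq
      subst hp; subst hq; rfl⟩

/-- Composition `φ ∘ ψ` of partial assignments: domain is the union of the domains,
`ψ` taking precedence. -/
def comp (φ ψ : PAssign D) : PAssign D :=
  ⟨ψ.1 ∪ φ.1.filter (fun p => p.1 ∉ FinFn.vars ψ), by
    constructor
    · intro p hp
      rcases Finset.mem_union.mp hp with h | h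
      · exact ψ.2.1 p h
      · exact φ.2.1 p (Finset.mem_filter.mp h).1
    · intro p hp q hq hpq
      rcases Finset.mem_union.mp hp with h1 | h1 <;>
        rcases Finset.mem_union.mp hq with h2 | h2
      · exact ψ.2.2 p h1 q h2 hpq
      · exact absurd (hpq ▸ Finset.mem_image_of_mem Prod.fst h1)
          (Finset.mem_filter.mp h2).2
      · exact absurd (hpq.symm ▸ Finset.mem_image_of_mem Prod.fst h2)
          (Finset.mem_filter.mp h1).2
      · exact φ.2.2 p (Finset.mem_filter.mp h1).1 q (Finset.mem_filter.mp h2).1 hpq⟩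

/-- Two clauses clash (in some variable). -/
def Clash (C C' : Clause D) : Prop :=
  ∃ v ε ε', (v, ε) ∈ C.1 ∧ (v, ε') ∈ C'.1 ∧ ε ≠ ε'

/-- The number of variables in which two clauses clash. -/
noncomputable def clashCount (C C' : Clause D) : ℕ :=
  ((FinFn.vars C).filter
    (fun v => ∃ ε ε', (v, ε) ∈ C.1 ∧ (v, ε') ∈ C'.1 ∧ ε ≠ ε')).card

/-- Hitting clause-sets: every two distinct clauses clash. -/
def Hitting (F : Finset (Clause D)) : Prop :=
  ∀ C ∈ F, ∀ C' ∈ F, C ≠ C' → Clash C C'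

/-- Boolean clauses over the boolean variables `V × α` (one boolean variable per
generalised literal; the value `false` gives the positive boolean literal). -/
abbrev BClause (V α : Type) :=
  Clause (fun _ : V × α => (Finset.univ : Finset Bool))

/-- The direct translation of a single clause: each literal `(v,ε)` is replaced by
the positive boolean literal of the boolean variable `(v,ε)`. -/
def dirClause (C : Clause D) : BClause V α :=
  ⟨C.1.image (fun p => (p, false)), by
    constructor
    · intro p _; exact Finset.mem_univ _
    · intro p hp q hq h
      simp only [Finset.mem_image] at hp hq
      obtain ⟨a, -, rfl⟩ := hp
      obtain ⟨b, -, rfl⟩ := hq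
      exact congrArg (fun x => (x, false)) h⟩

/-- The ALO-clause for a variable `v`: the negative boolean literals of the boolean
variables `(v,ε)` for `ε ∈ D v`. -/
def aloClause (D : V → Finset α) (v : V) : BClause V α :=
  ⟨(D v).image (fun ε => ((v, ε), true)), by
    constructor
    · intro p _; exact Finset.mem_univ _
    · intro p hp q hq h
      simp only [Finset.mem_image] at hp hq
      obtain ⟨a, -, rfl⟩ := hp
      obtain ⟨b, -, rfl⟩ := hq
      exact congrArg (fun x => (x, true)) h⟩

/-- The direct translation `Γ(F)`: the translated clauses together with the
ALO-clauses for all occurring variables. -/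
noncomputable def dirTrans (F : Finset (Clause D)) : Finset (BClause V α) :=
  F.image dirClause ∪ (mvars F.val).image (aloClause D)

/-!
Let `F'` be a sub-multi-clause-set of `F` of maximal deficiency and `W := var(F) \ var(F')`.
For a multiset `K` of further clauses, `δ(F' + K) ≤ δ(F')` says that `K` has at most as many
clauses as there are copies of the variables in `var(K) ∩ W`. This is Hall's condition for
`F[W]`, so the clauses touching `W` can be matched to copies of variables in `W`. Each `v ∈ W`
is matched to at most `|D_v| - 1` clauses, hence has a value which satisfies the `v`-literals of
all of them, and these values form a matching autarky with variable-set `W`. If `F` is matching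
lean, then `W = ∅`, and maximality of `δ(F')` forces `F' = F`. So `F` is the only sub-multiset
of maximal deficiency; in particular `0 = δ(∅) < δ(F)` for `F ≠ ∅`.
-/

lemma exists_pairing_iff_exists_injective {β γ : Type*} [DecidableEq β] (F : Multiset β)
    (r : β → γ → Prop) :
    (∃ P : Multiset (β × γ),
        P.map Prod.fst = F ∧ (P.map Prod.snd).Nodup ∧ ∀ p ∈ P, r p.1 p.2) ↔
      ∃ f : F → γ, Function.Injective f ∧ ∀ i : F, r i.1 (f i) := by
  constructor
  · rintro ⟨P, rfl, hnodup, hr⟩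
    have hinj : Function.Injective fun i : P => i.1.2 := by
      rw [← Multiset.map_univ P Prod.snd] at hnodup
      exact fun i j hij => Multiset.inj_on_of_nodup_map hnodup i (Finset.mem_univ i) j
        (Finset.mem_univ j) hij
    let e := P.mapEquiv Prod.fst
    refine ⟨fun i => (e.symm i).1.2, hinj.comp e.symm.injective, fun i => ?_⟩
    have hfst : i.1 = (e.symm i).1.1 := by
      rw [← P.mapEquiv_apply Prod.fst, e.apply_symm_apply]
    rw [hfst]
    exact hr (e.symm i).1 Multiset.coe_mem
  · rintro ⟨f, hinj, hr⟩
    refine ⟨Finset.univ.val.map fun i : F => (i.1, f i), ?_, ?_, ?_⟩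
    · rw [Multiset.map_map]
      exact Multiset.map_univ_coe F
    · rw [Multiset.map_map]
      exact Finset.univ.nodup.map hinj
    · intro p hp
      obtain ⟨i, -, rfl⟩ := Multiset.mem_map.mp hp
      exact hr i

lemma exists_le_map_eq_of_le_map {β γ : Type*} {f : β → γ} {G : Multiset β} {H : Multiset γ}
    (h : H ≤ G.map f) : ∃ K ≤ G, K.map f = H := by
  obtain ⟨R, hR⟩ := le_iff_exists_add.mp h
  have hrel : Multiset.Rel (fun b c => f b = c) G (H + R) :=
    Multiset.rel_map_left.mp (Multiset.rel_eq.mpr hR)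
  obtain ⟨K, L, hK, -, rfl⟩ := Multiset.rel_add_right.mp hrel
  exact ⟨K, Multiset.le_add_right K L, Multiset.rel_eq.mp (Multiset.rel_map_left.mpr hK)⟩

lemma card_filter_fst_eq_le {ι β : Type*} [Fintype ι] [DecidableEq β] {f : ι → β × ℕ}
    (hf : Function.Injective f) {n : β → ℕ} (hlt : ∀ i, (f i).2 < n (f i).1) (b : β) :
    (Finset.univ.filter fun i => (f i).1 = b).card ≤ n b := by
  rw [← Finset.card_range (n b)]
  refine Finset.card_le_card_of_injOn (fun i => (f i).2) ?_ ?_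
  · rintro i hi
    obtain rfl : (f i).1 = b := by simpa using hi
    simpa using hlt i
  · intro i hi j hj hij
    have hi' : (f i).1 = b := by simpa using hi
    have hj' : (f j).1 = b := by simpa using hj
    exact hf (Prod.ext (hi'.trans hj'.symm) hij)

namespace FinFn

omit [DecidableEq α]

lemma mem_vars {s : FinFn D} {v : V} : v ∈ s.vars ↔ ∃ ε, (v, ε) ∈ s.1 := by
  simp [vars]

lemma domain_nonempty_of_mem_vars {s : FinFn D} {v : V} (hv : v ∈ s.vars) : (D v).Nonempty := by
  obtain ⟨ε, hε⟩ := mem_vars.mp hv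
  exact ⟨ε, s.2.1 _ hε⟩

lemma vars_restrictVars (s : FinFn D) (W : Finset V) : (s.restrictVars W).vars = s.vars ∩ W := by
  ext v
  rw [Finset.mem_inter, mem_vars, mem_vars]
  simp [restrictVars]

lemma exists_vars_eq {W : Finset V} {p : V → α → Prop} (h : ∀ v ∈ W, ∃ ε ∈ D v, p v ε) :
    ∃ s : FinFn D, s.vars = W ∧ ∀ v ε, (v, ε) ∈ s.1 → p v ε := by
  choose e heD hep using h
  refine ⟨⟨W.attach.image fun v : W => (v.1, e v v.2), ?_, ?_⟩, ?_, ?_⟩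
  · intro q hq
    obtain ⟨v, -, rfl⟩ := Finset.mem_image.mp hq
    exact heD v v.2
  · intro q hq q' hq' hqq'
    obtain ⟨v, -, rfl⟩ := Finset.mem_image.mp hq
    obtain ⟨w, -, rfl⟩ := Finset.mem_image.mp hq'
    obtain rfl : v = w := Subtype.ext hqq'
    rfl
  · ext v
    exact mem_vars.trans (by simp)
  · intro v ε hvε
    obtain ⟨w, -, hw⟩ := Finset.mem_image.mp hvε
    obtain ⟨rfl, rfl⟩ := Prod.mk.inj hw
    exact hep w w.2

end FinFn

section VarCopies

omit [DecidableEq V] [DecidableEq α]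

/-- The variable-nodes of the clause-variable graph contributed by the variables in `W`: the
`|D v| - 1` copies `(v, k)` of each `v ∈ W`, numbered as in `MatchingSat`. -/
def varCopies (D : V → Finset α) (W : Finset V) : Finset (V × ℕ) :=
  (W.sigma fun v => Finset.range ((D v).card - 1)).map (Equiv.sigmaEquivProd V ℕ).toEmbedding

lemma mem_varCopies {W : Finset V} {x : V × ℕ} :
    x ∈ varCopies D W ↔ x.1 ∈ W ∧ x.2 < (D x.1).card - 1 := by
  simp [varCopies, Finset.mem_map_equiv]

lemma card_varCopies (W : Finset V) : (varCopies D W).card = ∑ v ∈ W, ((D v).card - 1) := by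
  simp [varCopies]

end VarCopies

section MultiClauseSet

variable {F F' : Multiset (Clause D)} {W : Finset V}

lemma mem_mvars {v : V} : v ∈ mvars F ↔ ∃ C ∈ F, v ∈ FinFn.vars C := by
  simp [mvars, Finset.mem_sup]

lemma domain_nonempty_of_mem_mvars {v : V} (hv : v ∈ mvars F) : (D v).Nonempty := by
  obtain ⟨C, -, hvC⟩ := mem_mvars.mp hv
  exact FinFn.domain_nonempty_of_mem_vars hvC

lemma mvars_add (F G : Multiset (Clause D)) : mvars (F + G) = mvars F ∪ mvars G := by
  simp [mvars, Finset.sup_union]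

lemma mvars_mono (h : F' ≤ F) : mvars F' ⊆ mvars F :=
  Finset.sup_mono (Multiset.toFinset_subset.mpr (Multiset.subset_of_le h))

lemma mvars_map_restrictVars (F : Multiset (Clause D)) (W : Finset V) :
    mvars (F.map fun C => FinFn.restrictVars C W) = mvars F ∩ W := by
  ext v
  simp only [mem_mvars, Multiset.mem_map, Finset.mem_inter]
  grind [FinFn.vars_restrictVars]

lemma mvars_touchedBy_inter (F : Multiset (Clause D)) (W : Finset V) :
    mvars (touchedBy F W) ∩ W = mvars F ∩ W := by
  ext v
  simp only [touchedBy, mem_mvars, Multiset.mem_filter, Finset.mem_inter]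
  constructor
  · rintro ⟨⟨C, ⟨hC, -⟩, hvC⟩, hvW⟩
    exact ⟨⟨C, hC, hvC⟩, hvW⟩
  · rintro ⟨⟨C, hC, hvC⟩, hvW⟩
    exact ⟨⟨C, ⟨hC, v, Finset.mem_inter.mpr ⟨hvC, hvW⟩⟩, hvC⟩, hvW⟩

lemma touchedBy_mvars_inter (F : Multiset (Clause D)) (W : Finset V) :
    touchedBy F (mvars F ∩ W) = touchedBy F W := by
  refine Multiset.filter_congr fun C hC => ?_
  have hsub : FinFn.vars C ⊆ mvars F := fun v hv => mem_mvars.mpr ⟨C, hC, hv⟩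
  rw [← Finset.inter_assoc, Finset.inter_eq_left.mpr hsub]

lemma touchedBy_le_sub (hle : F' ≤ F) (hW : Disjoint (mvars F') W) :
    touchedBy F W ≤ F - F' := by
  have huntouched : touchedBy F' W = 0 := by
    refine Multiset.filter_eq_nil.mpr fun C hC hCW => ?_
    obtain ⟨v, hv⟩ := hCW
    obtain ⟨hvC, hvW⟩ := Finset.mem_inter.mp hv
    exact Finset.disjoint_left.mp hW (mem_mvars.mpr ⟨C, hC, hvC⟩) hvW
  calc touchedBy F W = touchedBy F' W + touchedBy (F - F') W := by
        rw [touchedBy, ← add_tsub_cancel_of_le hle, Multiset.filter_add, add_tsub_cancel_left]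
        rfl
    _ = touchedBy (F - F') W := by rw [huntouched, zero_add]
    _ ≤ F - F' := Multiset.filter_le _ _

lemma delta_eq_card_sub_card_varCopies (F : Multiset (Clause D)) :
    delta F = (Multiset.card F : ℤ) - (varCopies D (mvars F)).card := by
  rw [delta, card_varCopies, Nat.cast_sum]
  congr 1
  refine Finset.sum_congr rfl fun v hv => ?_
  have hpos : 0 < (D v).card := (domain_nonempty_of_mem_mvars hv).card_pos
  omega

lemma delta_zero : delta (0 : Multiset (Clause D)) = 0 := by
  simp [delta, mvars]

lemma delta_add_eq_add_delta_map_restrictVars {K : Multiset (Clause D)}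
    (hW : mvars K ∩ W = mvars K \ mvars F) :
    delta (F + K) = delta F + delta (K.map fun C => FinFn.restrictVars C W) := by
  simp only [delta]
  rw [mvars_map_restrictVars, hW, mvars_add, ← Finset.union_sdiff_self_eq_union,
    Finset.sum_union Finset.disjoint_sdiff, Multiset.card_add, Multiset.card_map]
  push_cast
  ring

lemma delta_le_deltaStar (h : F' ≤ F) : delta F' ≤ deltaStar F :=
  Finset.le_sup' delta (by simpa using h)

lemma exists_tight (F : Multiset (Clause D)) : ∃ F', Tight F F' := by
  obtain ⟨F', hF', heq⟩ := Finset.exists_mem_eq_sup' (powerset_toFinset_nonempty F) delta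
  exact ⟨F', by simpa using hF', heq.symm⟩

lemma matchingSat_iff_exists_injective :
    MatchingSat F ↔ ∃ f : F → V × ℕ, Function.Injective f ∧
      ∀ C : F, (f C).1 ∈ FinFn.vars C.1 ∧ (f C).2 < (D (f C).1).card - 1 :=
  exists_pairing_iff_exists_injective F fun C (x : V × ℕ) =>
    x.1 ∈ FinFn.vars C ∧ x.2 < (D x.1).card - 1

lemma matchingSatisfying_iff_exists_injective {φ : PAssign D} :
    MatchingSatisfying φ F ↔ ∃ f : F → V × ℕ, Function.Injective f ∧
      ∀ C : F, (f C).2 < (D (f C).1).card - 1 ∧ EdgeSat φ C.1 (f C).1 :=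
  exists_pairing_iff_exists_injective F fun C (x : V × ℕ) =>
    x.2 < (D x.1).card - 1 ∧ EdgeSat φ C x.1

lemma matchingSat_of_delta_nonpos (h : ∀ H ≤ F, delta H ≤ 0) : MatchingSat F := by
  have hall (s : Finset F) :
      s.card ≤ (s.biUnion fun C => varCopies D (FinFn.vars C.1)).card := by
    let H : Multiset (Clause D) := s.val.map fun C => C.1
    have hHF : H ≤ F := by
      rw [← Multiset.map_univ_coe F]
      exact Multiset.map_le_map (Finset.val_le_iff.mpr s.subset_univ)
    have hcopies : varCopies D (mvars H) = s.biUnion fun C => varCopies D (FinFn.vars C.1) := by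
      ext x
      simp only [mem_varCopies, mem_mvars, H, Multiset.mem_map, Finset.mem_val, Finset.mem_biUnion]
      grind
    have hcard : Multiset.card H = s.card := Multiset.card_map _ _
    have hdelta : delta H ≤ 0 := h H hHF
    rw [delta_eq_card_sub_card_varCopies, hcopies, hcard] at hdelta
    omega
  obtain ⟨f, hinj, hf⟩ := (Finset.all_card_le_biUnion_card_iff_exists_injective _).mp hall
  exact matchingSat_iff_exists_injective.mpr ⟨f, hinj, fun C => mem_varCopies.mp (hf C)⟩

lemma exists_value_avoiding_matched_literals {f : F → V × ℕ} (hinj : Function.Injective f)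
    (hf : ∀ C : F, (f C).1 ∈ FinFn.vars C.1 ∧ (f C).2 < (D (f C).1).card - 1)
    {v : V} (hv : (D v).Nonempty) :
    ∃ ε ∈ D v, ∀ C : F, (f C).1 = v → (v, ε) ∉ C.1.1 := by
  choose lit hlit using fun C => FinFn.mem_vars.mp (hf C).1
  let matched : Finset F := Finset.univ.filter fun C => (f C).1 = v
  have hcard : (matched.image lit).card < (D v).card :=
    calc (matched.image lit).card ≤ matched.card := Finset.card_image_le
      _ ≤ (D v).card - 1 :=
        card_filter_fst_eq_le (n := fun w => (D w).card - 1) hinj (fun C => (hf C).2) v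
      _ < (D v).card := Nat.sub_one_lt hv.card_ne_zero
  obtain ⟨ε, hεD, hε⟩ := Finset.exists_mem_notMem_of_card_lt_card hcard
  refine ⟨ε, hεD, ?_⟩
  rintro C rfl hC
  have hlit_eq : lit C = ε := congrArg Prod.snd (C.1.2.2 _ (hlit C) _ hC rfl)
  exact hε (Finset.mem_image.mpr ⟨C, by simp [matched], hlit_eq⟩)

lemma MatchingSat.exists_matchingSatisfying (h : MatchingSat F) :
    ∃ φ : PAssign D, φ.vars = mvars F ∧ MatchingSatisfying φ F := by
  obtain ⟨f, hinj, hf⟩ := matchingSat_iff_exists_injective.mp h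
  obtain ⟨φ, hvars, hφ⟩ := FinFn.exists_vars_eq fun v (hv : v ∈ mvars F) =>
    exists_value_avoiding_matched_literals hinj hf (domain_nonempty_of_mem_mvars hv)
  refine ⟨φ, hvars, matchingSatisfying_iff_exists_injective.mpr
    ⟨f, hinj, fun C => ⟨(hf C).2, ?_⟩⟩⟩
  obtain ⟨ε, hε⟩ := FinFn.mem_vars.mp (hf C).1
  have hmem : (f C).1 ∈ φ.vars := hvars ▸ mem_mvars.mpr ⟨C.1, Multiset.coe_mem, (hf C).1⟩
  obtain ⟨ε', hε'⟩ := FinFn.mem_vars.mp hmem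
  refine ⟨ε, hε, ε', hε', ?_⟩
  rintro rfl
  exact hφ _ _ hε' C rfl hε

omit [DecidableEq V] [DecidableEq α] in
lemma MatchingSatisfying.of_map {φ : PAssign D} {g : Clause D → Clause D}
    (hg : ∀ C, (g C).1 ⊆ C.1) (h : MatchingSatisfying φ (F.map g)) : MatchingSatisfying φ F := by
  obtain ⟨f, hinj, hf⟩ := matchingSatisfying_iff_exists_injective.mp h
  let e := F.mapEquiv g
  refine matchingSatisfying_iff_exists_injective.mpr
    ⟨f ∘ e, hinj.comp e.injective, fun C => ⟨(hf (e C)).1, ?_⟩⟩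
  obtain ⟨ε, hε, hsat⟩ := (hf (e C)).2
  rw [Multiset.mapEquiv_apply] at hε
  exact ⟨ε, hg _ hε, hsat⟩

lemma exists_isMatchingAutarky_of_matchingSat_restrictTo (h : MatchingSat (restrictTo F W)) :
    ∃ φ : PAssign D, φ.vars = mvars F ∩ W ∧ IsMatchingAutarky φ F := by
  obtain ⟨φ, hvars, hφ⟩ := h.exists_matchingSatisfying
  rw [restrictTo, mvars_map_restrictVars, mvars_touchedBy_inter] at hvars
  refine ⟨φ, hvars, ?_⟩
  rw [IsMatchingAutarky, hvars, touchedBy_mvars_inter]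
  exact hφ.of_map fun C => Finset.filter_subset _ _

lemma Tight.matchingSat_restrictTo (h : Tight F F') :
    MatchingSat (restrictTo F (mvars F \ mvars F')) := by
  obtain ⟨hle, heq⟩ := h
  refine matchingSat_of_delta_nonpos fun H hH => ?_
  obtain ⟨K, hK, rfl⟩ := exists_le_map_eq_of_le_map hH
  have hKsub : K ≤ F - F' := hK.trans (touchedBy_le_sub hle Finset.disjoint_sdiff)
  have hKF : F' + K ≤ F := by
    calc F' + K ≤ F' + (F - F') := by gcongr
      _ = F := add_tsub_cancel_of_le hle
  have hinter : mvars K ∩ (mvars F \ mvars F') = mvars K \ mvars F' := by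
    have hsub : mvars K ⊆ mvars F := mvars_mono (hKsub.trans (Multiset.sub_le_self F F'))
    grind
  have hmax : delta (F' + K) ≤ delta F' := heq ▸ delta_le_deltaStar hKF
  rw [delta_add_eq_add_delta_map_restrictVars hinter] at hmax
  linarith

lemma MatchingLean.eq_of_tight (hlean : MatchingLean F) (h : Tight F F') : F' = F := by
  obtain ⟨φ, hφvars, hφ⟩ :=
    exists_isMatchingAutarky_of_matchingSat_restrictTo h.matchingSat_restrictTo
  have hsub : mvars F ⊆ mvars F' := by
    intro v hv
    by_contra hv'
    exact hlean ⟨φ, hφ, v, by simp [hφvars, hv, hv']⟩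
  have hvars : mvars F' = mvars F := (mvars_mono h.1).antisymm hsub
  have hdelta : delta F ≤ delta F' := h.2 ▸ delta_le_deltaStar le_rfl
  have hcard : Multiset.card F ≤ Multiset.card F' := by
    rw [delta, delta, hvars] at hdelta
    omega
  exact Multiset.eq_of_le_of_card_le h.1 hcard

end MultiClauseSet

/-- a non-empty matching lean multi-clause-set satisfies
`δ*(F) = δ(F) ≥ 1`. -/
theorem matchingLean_deficiency_ge_one
    (hD : ∀ v, (D v).Nonempty) (F : Multiset (Clause D))
    (hne : F ≠ 0) (hlean : MatchingLean F) :
    deltaStar F = delta F ∧ 1 ≤ delta F := by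
  have htight : Tight F F := by
    obtain ⟨F', hF'⟩ := exists_tight F
    rwa [hlean.eq_of_tight hF'] at hF'
  have hnonneg : 0 ≤ delta F :=
    calc 0 = delta (0 : Multiset (Clause D)) := delta_zero.symm
      _ ≤ deltaStar F := delta_le_deltaStar (Multiset.zero_le F)
      _ = delta F := htight.2.symm
  have hne_zero : delta F ≠ 0 := fun h =>
    hne (hlean.eq_of_tight ⟨Multiset.zero_le F, by rw [delta_zero, ← h, htight.2]⟩).symm
  exact ⟨htight.2.symm, by omega⟩

end GCLS
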